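/- arXiv:1510.01557 — 9 statements merged into one kernel-verified Lean document; each statement's English description precedes it below -/
import Mathlib

section
/- Let G = (V, E_1, …, E_α) be an α-edge-colored graph, let i ∈ {1, …, α}, and let v be a vertex having exactly one neighbor u in the color-i graph G_i. Let G' be the α-edge-colored graph obtained from G by deleting the edge (v,u) from E_i, all other color classes being unchanged. Then for every nonnegative integer k, G has an α-simultaneous feedback vertex set of size at most k if and only if G' has an α-simultaneous feedback vertex set of size at most k. (Safeness of reduction rule α-SimFVS.R2.) -/
open SimpleGraph

/-- A set `S` of vertices is an α-simultaneous feedback vertex set of the α-edge-colored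
graph `G = (V, E_1, …, E_α)` if deleting `S` from every color graph leaves an acyclic graph. -/
def IsSimFVS {V : Type*} {α : ℕ} (G : Fin α → SimpleGraph V) (S : Set V) : Prop :=
  ∀ i, ((G i).induce Sᶜ).IsAcyclic

theorem acyclic_aux {W : Type*} (H H' : SimpleGraph W) (P : W → Prop)
    (h1 : ∀ a b c, P a → H.Adj a b → H.Adj a c → b = c)
    (h2 : ∀ a b, H.Adj a b → H'.Adj a b ∨ P a ∨ P b) (hac : H'.IsAcyclic) : H.IsAcyclic := by
  intro w c hc
  have hP : ∀ a ∈ c.support, ¬ P a := by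
    intro a ha hPa
    have h3 := hc.ncard_neighborSet_toSubgraph_eq_two ha
    have h4 : (c.toSubgraph.neighborSet a).ncard ≤ 1 := by
      rw [Set.ncard_le_one_iff (Walk.finite_neighborSet_toSubgraph c)]
      intro x y hx hy
      exact h1 a x y hPa (c.toSubgraph.adj_sub hx) (c.toSubgraph.adj_sub hy)
    omega
  have he : ∀ e ∈ c.edges, e ∈ H'.edgeSet := by
    intro e
    induction e using Sym2.ind with
    | _ x y =>
      intro hxy
      rcases h2 x y (c.adj_of_mem_edges hxy) with h | h | h
      · exact h
      · exact absurd h (hP x (c.fst_mem_support_of_mem_edges hxy))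
      · exact absurd h (hP y (c.snd_mem_support_of_mem_edges hxy))
  exact hac _ (hc.transfer he)

/-- Safeness of reduction rule α-SimFVS.R2: if `v` has exactly one neighbor `u` in the
color-`i` graph `G i`, then deleting the edge `(v, u)` from color class `i` preserves the
existence of an α-simultaneous feedback vertex set of size at most `k`. -/
theorem alphaSimFVS_R2_safe {V : Type*} [Fintype V] [DecidableEq V] {α : ℕ}
    (G : Fin α → SimpleGraph V) (i : Fin α) (v u : V)
    (h : (G i).neighborSet v = {u}) (k : ℕ) :
    (∃ S : Finset V, S.card ≤ k ∧ IsSimFVS G ↑S) ↔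
    (∃ S : Finset V, S.card ≤ k ∧
      IsSimFVS (Function.update G i ((G i).deleteEdges {s(v, u)})) ↑S) := by
  have hu : ∀ x, (G i).Adj v x → x = u := by
    intro x hx
    have : x ∈ (G i).neighborSet v := hx
    rw [h] at this
    exact this
  refine exists_congr fun S => and_congr_right fun _ => forall_congr' fun j => ?_
  by_cases hj : j = i
  · subst hj
    rw [Function.update_self]
    constructor
    · intro hac
      refine hac.anti ?_
      intro a b hab
      simp only [comap_adj, deleteEdges_adj] at hab ⊢
      exact hab.1
    · refine acyclic_aux _ _ (fun a => a.1 = v) ?_ ?_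
      · rintro ⟨a, ha⟩ ⟨b, hb⟩ ⟨c, hc⟩ rfl hab hac
        exact Subtype.ext ((hu b hab).trans (hu c hac).symm)
      · rintro ⟨a, ha⟩ ⟨b, hb⟩ hab
        by_cases hav : a = v
        · exact Or.inr (Or.inl hav)
        by_cases hbv : b = v
        · exact Or.inr (Or.inr hbv)
        left
        have hab' : (G j).Adj a b := hab
        simp [hab', hav, hbv]
  · rw [Function.update_of_ne hj]
end

section
/- Let G = (V, E_1, …, E_α) be an α-edge-colored graph and let v be a vertex of total degree 2 whose both edges lie in the color-i graph G_i: v has exactly two distinct neighbors u and w, both adjacent to v in G_i, and v has degree 0 in every other color class. Assume moreover that u and w are not adjacent in G_i. Let G' be the α-edge-colored graph obtained from G by deleting the edges (v,u) and (v,w) from E_i and adding the edge (u,w) to E_i. Then for every nonnegative integer k, G has an α-simultaneous feedback vertex set of size at most k if and only if G' has an α-simultaneous feedback vertex set of size at most k. (Safeness of reduction rule α-SimFVS.R3 in the simple-graph setting; the nonadjacency of u and w replaces the paper's use of double edges.) -/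
open SimpleGraph

/-- restriction of `H` to the complement of `S`, on the same vertex set -/
def rsG {V : Type*} (H : SimpleGraph V) (S : Set V) : SimpleGraph V where
  Adj a b := H.Adj a b ∧ a ∉ S ∧ b ∉ S
  symm := ⟨fun _ _ h => ⟨h.1.symm, h.2.2, h.2.1⟩⟩
  loopless := ⟨fun _ h => h.1.ne rfl⟩

theorem rsG_adj {V : Type*} (H : SimpleGraph V) (S : Set V) (a b : V) :
    (rsG H S).Adj a b ↔ H.Adj a b ∧ a ∉ S ∧ b ∉ S := Iff.rfl

theorem rsG_acyclic {V : Type*} (H : SimpleGraph V) (S : Set V) :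
    (H.induce Sᶜ).IsAcyclic ↔ (rsG H S).IsAcyclic := by
  constructor
  · intro h a c hc
    have hs : ∀ x ∈ c.support, x ∈ Sᶜ := by
      intro x hx
      obtain ⟨e, he, hxe⟩ := (Walk.mem_support_iff_exists_mem_edges_of_not_nil hc.not_nil).1 hx
      have := c.edges_subset_edgeSet he
      induction e with | h p q =>
      rw [mem_edgeSet, rsG_adj] at this
      rcases Sym2.mem_iff.1 hxe with rfl | rfl
      · exact this.2.1
      · exact this.2.2
    have hle : rsG H S ≤ H := fun _ _ h => h.1
    have hc' := hc.mapLe hle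
    refine h ((c.mapLe hle).induce Sᶜ (by simpa using hs)) ?_
    refine Walk.IsCycle.of_map (f := (Embedding.induce Sᶜ).toHom) ?_
    rw [Walk.map_induce]
    exact hc'
  · intro h
    exact IsAcyclic.comap (G' := rsG H S) ⟨Subtype.val, fun {a b} hab => ⟨hab, a.2, b.2⟩⟩ Subtype.val_injective h

theorem reach_closed {V : Type*} {H : SimpleGraph V} (P : V → Prop)
    (hP : ∀ a b, H.Adj a b → P a → P b) {a b : V} (h : H.Reachable a b) (ha : P a) : P b := by
  obtain ⟨p⟩ := h
  induction p with
  | nil => exact ha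
  | cons h _ ih => exact ih (hP _ _ h ha)

theorem pendant {V : Type*} {H : SimpleGraph V} {v w : V} (hv : ∀ x, ¬ H.Adj v x)
    (hvw : v ≠ w) (h : H.IsAcyclic) : (H ⊔ edge v w).IsAcyclic := by
  refine h.sup_edge_of_not_reachable fun hr => hvw ?_
  refine (reach_closed (· = v) ?_ hr rfl).symm
  rintro a b hab rfl
  exact (hv _ hab).elim

theorem fwd {V : Type*} {H : SimpleGraph V} {v u w : V} (hv : ∀ x, ¬ H.Adj v x)
    (hvu : v ≠ u) (hvw : v ≠ w) (huw : u ≠ w)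
    (h : (H ⊔ edge v u ⊔ edge v w).IsAcyclic) : (H ⊔ edge u w).IsAcyclic := by
  obtain ⟨h1, h2⟩ := isAcyclic_sup_fromEdgeSet_iff.1 h
  refine (h1.anti le_sup_left).sup_edge_of_not_reachable fun hr => ?_
  have h3 : (H ⊔ edge v u).Adj v u := by simp [edge_adj, hvu]
  rcases h2 (h3.reachable.trans (hr.mono le_sup_left)) with h4 | h4
  · exact hvw h4
  · have := hv w
    simp [edge_adj] at h4
    grind

theorem bwd {V : Type*} {H : SimpleGraph V} {v u w : V} (hv : ∀ x, ¬ H.Adj v x)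
    (hvu : v ≠ u) (hvw : v ≠ w) (huw : u ≠ w) (hn : ¬ H.Adj u w)
    (h : (H ⊔ edge u w).IsAcyclic) : (H ⊔ edge v u ⊔ edge v w).IsAcyclic := by
  obtain ⟨h1, h2⟩ := isAcyclic_sup_fromEdgeSet_iff.1 h
  refine (pendant hv hvu h1).sup_edge_of_not_reachable fun hr => ?_
  have := reach_closed (fun x => x = v ∨ H.Reachable u x) ?_ hr (Or.inl rfl)
  · grind
  · intro a b hab ha
    simp only [sup_adj, edge_adj] at hab
    rcases hab with hab | hab
    · rcases ha with rfl | ha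
      · exact (hv _ hab).elim
      · exact Or.inr (ha.trans hab.reachable)
    · rcases hab.1 with ⟨_, rfl⟩ | ⟨_, rfl⟩
      · exact Or.inr (Reachable.refl _)
      · exact Or.inl rfl

/-- Safeness of reduction rule α-SimFVS.R3 (simple-graph setting): if `v` has total degree 2
with both edges in the color-`i` graph, going to distinct, nonadjacent neighbors `u` and `w`,
then replacing the edges `(v,u)`, `(v,w)` of color `i` by the edge `(u,w)` of color `i`
preserves the existence of an α-simultaneous feedback vertex set of size at most `k`. -/
theorem alphaSimFVS_R3_safe {V : Type*} [Fintype V] [DecidableEq V] {α : ℕ}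
    (G : Fin α → SimpleGraph V) (i : Fin α) (v u w : V) (huw : u ≠ w)
    (hN : (G i).neighborSet v = {u, w})
    (hother : ∀ j, j ≠ i → (G j).neighborSet v = ∅)
    (hnadj : ¬ (G i).Adj u w) (k : ℕ) :
    (∃ S : Finset V, S.card ≤ k ∧ IsSimFVS G ↑S) ↔
    (∃ S : Finset V, S.card ≤ k ∧
      IsSimFVS (Function.update G i
        ((G i).deleteEdges {s(v, u), s(v, w)} ⊔ SimpleGraph.fromEdgeSet {s(u, w)})) ↑S) := by
  have hA : ∀ x, (G i).Adj v x ↔ x = u ∨ x = w := fun x => by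
    rw [← mem_neighborSet, hN]; simp
  have hO : ∀ j, j ≠ i → ∀ x, ¬ (G j).Adj v x := fun j hj x => by
    rw [← mem_neighborSet, hother j hj]; simp
  have hvu : v ≠ u := ((hA u).2 (Or.inl rfl)).ne
  have hvw : v ≠ w := ((hA w).2 (Or.inr rfl)).ne
  set B := (G i).deleteEdges {s(v, u), s(v, w)} with hB
  have hBadj : ∀ a b, B.Adj a b ↔ (G i).Adj a b ∧ a ≠ v ∧ b ≠ v := by
    intro a b
    have h1 := hA a
    have h2 := hA b
    have h3 := (G i).adj_comm a v
    have h4 : (G i).Adj a b → a ≠ b := fun h => h.ne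
    simp only [hB, deleteEdges_adj, Set.mem_insert_iff, Set.mem_singleton_iff, Sym2.eq_iff]
    grind
  have hBv : ∀ x, ¬ B.Adj v x := fun x h => ((hBadj _ _).1 h).2.1 rfl
  have hG'adj : ∀ a b, (B ⊔ fromEdgeSet {s(u, w)}).Adj a b ↔
      B.Adj a b ∨ (a = u ∧ b = w) ∨ (a = w ∧ b = u) := by
    intro a b
    simp only [sup_adj, fromEdgeSet_adj, Set.mem_singleton_iff, Sym2.eq_iff]
    grind
  have hGadj : ∀ a b, (G i).Adj a b → B.Adj a b ∨ (a = v ∧ (b = u ∨ b = w)) ∨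
      (b = v ∧ (a = u ∨ a = w)) := by
    intro a b h
    have h1 := hA a
    have h2 := hA b
    have h3 := (G i).adj_comm a v
    rw [hBadj]
    grind
  clear_value B
  have hHv : ∀ S : Set V, ∀ x, ¬ (rsG B S).Adj v x := fun S x h => hBv x h.1
  constructor
  · rintro ⟨S, hS, h⟩
    by_cases hv : v ∈ S
    · refine ⟨insert u (S.erase v), ?_, ?_⟩
      · have := Finset.card_insert_le u (S.erase v)
        have := Finset.card_erase_add_one hv
        omega
      · intro j
        rw [rsG_acyclic]
        refine ((rsG_acyclic _ _).1 (h j)).anti fun a b hab => ?_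
        rw [rsG_adj] at hab ⊢
        by_cases hj : j = i
        · subst hj
          simp only [Function.update_self, hG'adj, hBadj] at hab
          simp at hab ⊢
          grind
        · simp only [Function.update_of_ne hj] at hab
          have h1 := hO j hj a
          have h2 := hO j hj b
          rw [adj_comm] at h1
          simp at hab ⊢
          grind
    · refine ⟨S, hS, fun j => ?_⟩
      by_cases hj : j = i
      · subst hj
        rw [rsG_acyclic, Function.update_self]
        have h := (rsG_acyclic _ _).1 (h j)
        by_cases hc : u ∈ S ∨ w ∈ S
        · refine h.anti fun a b hab => ?_
          rw [rsG_adj, hG'adj, hBadj] at hab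
          rw [rsG_adj]
          simp at hab ⊢
          grind
        · push Not at hc
          refine (fwd (hHv S) hvu hvw huw (h.anti ?_)).anti ?_
          · intro a b hab
            simp only [sup_adj, edge_adj, rsG_adj, hBadj] at hab ⊢
            have h1 := hA a
            have h2 := hA b
            have h3 := (G j).adj_comm a v
            simp at hab ⊢
            grind
          · intro a b hab
            rw [rsG_adj, hG'adj] at hab
            simp only [sup_adj, edge_adj, rsG_adj] at hab ⊢
            grind
      · rw [Function.update_of_ne hj]
        exact h j
  · rintro ⟨S, hS, h⟩
    refine ⟨S, hS, fun j => ?_⟩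
    have h := h j
    by_cases hj : j = i
    · subst hj
      rw [rsG_acyclic, Function.update_self] at h
      rw [rsG_acyclic]
      have hH : (rsG B S).IsAcyclic := by
        refine h.anti fun a b hab => ?_
        exact ⟨(hG'adj _ _).2 (Or.inl hab.1), hab.2⟩
      have key : ∀ K : SimpleGraph V, K.IsAcyclic → (∀ a b, (rsG B S).Adj a b → K.Adj a b) →
          (v ∉ S → u ∉ S → K.Adj v u) → (v ∉ S → w ∉ S → K.Adj v w) →
          (rsG (G j) S).IsAcyclic := by
        intro K hK h1 h2 h3
        refine hK.anti fun a b hab => ?_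
        obtain ⟨hab, ha, hb⟩ := hab
        simp only [Finset.mem_coe] at ha hb
        rcases hGadj _ _ hab with h' | ⟨rfl, rfl | rfl⟩ | ⟨rfl, rfl | rfl⟩
        · exact h1 _ _ ⟨h', ha, hb⟩
        · exact h2 ha hb
        · exact h3 ha hb
        · exact (h2 hb ha).symm
        · exact (h3 hb ha).symm
      by_cases hu : u ∈ S
      · exact key _ (pendant (hHv S) hvw hH) (fun a b h => Or.inl h) (by grind)
          (fun _ _ => Or.inr (by simp [edge_adj, hvw]))
      · by_cases hw : w ∈ S
        · exact key _ (pendant (hHv S) hvu hH) (fun a b h => Or.inl h)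
            (fun _ _ => Or.inr (by simp [edge_adj, hvu])) (by grind)
        · refine key _ (bwd (hHv S) hvu hvw huw (fun h => hnadj ((hBadj _ _).1 h.1).1)
            (h.anti ?_)) (fun a b h => Or.inl (Or.inl h))
            (fun _ _ => Or.inl (Or.inr (by simp [edge_adj, hvu])))
            (fun _ _ => Or.inr (by simp [edge_adj, hvw]))
          intro a b hab
          rw [rsG_adj, hG'adj]
          simp only [sup_adj, edge_adj, rsG_adj] at hab ⊢
          simp at hab ⊢
          grind
    · rwa [Function.update_of_ne hj] at h
end

section
/- Let G be a simple graph in which every vertex has degree at least 2, and let W ⊆ V(G) be a set of vertices such that the graph F = G − W is a forest; root each tree of F at an arbitrary vertex. Let v_c be a cordate vertex of F such that no cordate vertex in the same tree of F has strictly larger index, and let u_c be a vertex of the subtree T_{v_c} having a neighbor in W. Then on the unique path u_c, x_1, …, x_t, v_c in F from u_c to v_c, every internal vertex x_1, …, x_t has degree exactly 2 in G. -/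
open SimpleGraph

/-- `x` lies in the subtree rooted at `v` (with respect to the rooting `root` of the forest
`F`): the vertex `v` lies on every path (hence on the unique path) in `F` from `x` to the
root of the tree containing `x`. -/
def Subtree {β : Type*} (F : SimpleGraph β) (root : β → β) (v : β) : Set β :=
  {x | ∀ p : F.Walk x (root x), p.IsPath → v ∈ p.support}

/-- `x` has a neighbor in `W` (in the graph `G`). -/
def NbrInW {V : Type*} (G : SimpleGraph V) (W : Set V) (x : V) : Prop :=
  ∃ w ∈ W, G.Adj x w

/-- A vertex `v` of the forest `F = G − W` is cordate if either it is a leaf or isolated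
vertex of `F` with at least two neighbors in `W`, or its subtree contains two distinct
vertices each having at least one neighbor in `W`. -/
def Cordate {V : Type*} (G : SimpleGraph V) (W : Set V)
    (F : SimpleGraph ↥Wᶜ) (root : ↥Wᶜ → ↥Wᶜ) (v : ↥Wᶜ) : Prop :=
  ((F.neighborSet v).ncard ≤ 1 ∧ 2 ≤ {w | w ∈ W ∧ G.Adj ↑v w}.ncard) ∨
  (∃ a ∈ Subtree F root v, ∃ b ∈ Subtree F root v,
    a ≠ b ∧ NbrInW G W ↑a ∧ NbrInW G W ↑b)

theorem aux_snd {β : Type*} {F : SimpleGraph β} (hF : F.IsAcyclic) {a b n : β}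
    (q : F.Walk a b) (hq : q.IsPath) (hn : F.Adj a n) (hm : n ∈ q.support) : n = q.snd := by
  classical
  have h1 : (q.takeUntil n hm).IsPath := hq.takeUntil hm
  have h2 : (Walk.cons hn Walk.nil : F.Walk a n).IsPath := by
    simp [hn.ne]
  have h3 : q.takeUntil n hm = Walk.cons hn Walk.nil := by
    have := hF.path_unique ⟨_, h1⟩ ⟨_, h2⟩
    exact congrArg Subtype.val this
  have h4 := q.take_spec hm
  rw [h3] at h4
  rw [← h4]
  simp

theorem aux_leaf {β : Type*} [Fintype β] {F : SimpleGraph β} (hF : F.IsAcyclic) (r y : β) (k : ℕ) :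
    ∀ (z : β) (q : F.Walk z r), q.IsPath → y ∈ q.support → Fintype.card β ≤ q.length + k →
      ∃ z', ∃ q' : F.Walk z' r, q'.IsPath ∧ y ∈ q'.support ∧ ∀ n, F.Adj z' n → n = q'.snd := by
  induction k with
  | zero =>
    intro z q hq hy hk
    have := hq.length_lt
    omega
  | succ k ih =>
    intro z q hq hy hk
    by_cases h : ∀ n, F.Adj z n → n = q.snd
    · exact ⟨z, q, hq, hy, h⟩
    · push Not at h
      obtain ⟨n, hn, hne⟩ := h
      have hns : n ∉ q.support := fun hm => hne (aux_snd hF q hq hn hm)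
      refine ih n (Walk.cons hn.symm q) (hq.cons hns) (by simp [hy]) ?_
      simp only [Walk.length_cons]
      omega

theorem aux_sub {β : Type*} {F : SimpleGraph β} (hF : F.IsAcyclic) (root : β → β) {a r v : β}
    (hr : root a = r) (q : F.Walk a r) (hq : q.IsPath) (hv : v ∈ q.support) :
    a ∈ Subtree F root v := by
  subst hr
  intro p hp
  have : p = q := congrArg Subtype.val (hF.path_unique ⟨p, hp⟩ ⟨q, hq⟩)
  rwa [this]

theorem aux_dist {β : Type*} {F : SimpleGraph β} (hF : F.IsAcyclic) {a r : β}
    (q : F.Walk a r) (hq : q.IsPath) : F.dist a r = q.length := by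
  obtain ⟨p, hp⟩ := q.reachable.exists_walk_length_eq_dist
  have h := p.isPath_of_length_eq_dist hp
  have : p = q := congrArg Subtype.val (hF.path_unique ⟨p, h⟩ ⟨q, hq⟩)
  rw [← this, hp]

/-- Let `G` be a simple graph with all degrees at least 2 and let `W` be a vertex set such
that `F = G − W` is a forest, rooted via `root` (every vertex reaches its root, and the
root is constant on components).  If `v_c` is a cordate vertex whose index (distance to its
root) is maximum among cordate vertices of its tree, and `u_c` is a vertex of the subtree of
`v_c` with a neighbor in `W`, then every internal vertex of the unique path in `F` from
`u_c` to `v_c` has degree exactly 2 in `G`. -/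
theorem cordate_path_internal_degree_two {V : Type*} [Fintype V]
    (G : SimpleGraph V) (W : Set V)
    (hdeg : ∀ x : V, 2 ≤ (G.neighborSet x).ncard)
    (hforest : (G.induce Wᶜ).IsAcyclic)
    (root : ↥Wᶜ → ↥Wᶜ)
    (hreach : ∀ x, (G.induce Wᶜ).Reachable x (root x))
    (hconst : ∀ x y, (G.induce Wᶜ).Reachable x y → root x = root y)
    (vc : ↥Wᶜ)
    (hvc : Cordate G W (G.induce Wᶜ) root vc)
    (hmax : ∀ x, Cordate G W (G.induce Wᶜ) root x → (G.induce Wᶜ).Reachable x vc →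
      (G.induce Wᶜ).dist x (root x) ≤ (G.induce Wᶜ).dist vc (root vc))
    (uc : ↥Wᶜ) (huc : uc ∈ Subtree (G.induce Wᶜ) root vc) (hucW : NbrInW G W ↑uc)
    (p : (G.induce Wᶜ).Walk uc vc) (hp : p.IsPath) :
    ∀ x ∈ p.support, x ≠ uc → x ≠ vc → (G.neighborSet ↑x).ncard = 2 := by
  classical
  intro x hx hxu hxv
  have hru : root uc = root vc := hconst _ _ p.reachable
  have hrx : root x = root vc := hconst _ _ (p.dropUntil x hx).reachable
  obtain ⟨P, hP⟩ : ∃ P : (G.induce Wᶜ).Walk uc (root vc), P.IsPath := by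
    have := hreach uc
    rw [hru] at this
    exact this.exists_isPath
  have hvP : vc ∈ P.support := by
    have h : ∀ r, root uc = r → ∀ P : (G.induce Wᶜ).Walk uc r, P.IsPath → vc ∈ P.support := by
      intro r hr
      subst hr
      exact huc
    exact h _ hru P hP
  have hpP : P.takeUntil vc hvP = p :=
    congrArg Subtype.val (hforest.path_unique ⟨_, hP.takeUntil hvP⟩ ⟨p, hp⟩)
  have hPdec : p.append (P.dropUntil vc hvP) = P := by
    rw [← hpP]; exact P.take_spec hvP
  have hxP : x ∈ P.support := by
    rw [← hPdec, Walk.mem_support_append_iff]; exact Or.inl hx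
  -- the path from x to the root
  have hDec2 : (p.takeUntil x hx).append ((p.dropUntil x hx).append (P.dropUntil vc hvP)) = P := by
    rw [Walk.append_assoc, Walk.take_spec, hPdec]
  obtain ⟨Q, hQ⟩ : ∃ Q, Q = (p.dropUntil x hx).append (P.dropUntil vc hvP) := ⟨_, rfl⟩
  rw [← hQ] at hDec2
  have hQp : Q.IsPath := by
    rw [← hDec2] at hP; exact hP.of_append_right
  have hlt : (G.induce Wᶜ).dist vc (root vc) < (G.induce Wᶜ).dist x (root x) := by
    rw [hrx, aux_dist hforest _ hQp, aux_dist hforest _ (hP.dropUntil hvP), hQ, Walk.length_append]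
    have : (p.dropUntil x hx).length ≠ 0 := fun h => hxv (Walk.eq_of_length_eq_zero h)
    omega
  have hnc : ¬ Cordate G W (G.induce Wᶜ) root x := fun h =>
    absurd (hmax x h (p.dropUntil x hx).reachable) (not_le.mpr hlt)
  have huS : uc ∈ Subtree (G.induce Wᶜ) root x := aux_sub hforest root hru P hP hxP
  have hnoW : ∀ z, z ∈ Subtree (G.induce Wᶜ) root x → z ≠ uc → ¬ NbrInW G W z := by
    intro z hz hne hW
    exact hnc (Or.inr ⟨z, hz, uc, huS, hne, hW, hucW⟩)
  have hxS : x ∈ Subtree (G.induce Wᶜ) root x := aux_sub hforest root hrx Q hQp (by simp)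
  have hxW := hnoW x hxS hxu
  refine le_antisymm ?_ (hdeg x)
  have hsub : G.neighborSet (x : V) ⊆
      {((Q.snd : ↥Wᶜ) : V), (((p.takeUntil x hx).reverse.snd : ↥Wᶜ) : V)} := by
    intro y' hy'
    have hy'W : y' ∈ Wᶜ := fun h => hxW ⟨y', h, hy'⟩
    obtain ⟨y, rfl⟩ : ∃ y : ↥Wᶜ, (y : V) = y' := ⟨⟨y', hy'W⟩, rfl⟩
    have hadj : (G.induce Wᶜ).Adj x y := hy'
    by_contra hcon
    simp only [Set.mem_insert_iff, Set.mem_singleton_iff, not_or] at hcon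
    obtain ⟨hc1, hc2⟩ := hcon
    have hyQ : y ∉ Q.support := fun h => hc1 (congrArg _ (aux_snd hforest Q hQp hadj h))
    have hyT : y ∉ (p.takeUntil x hx).support := fun h =>
      hc2 (congrArg _ (aux_snd hforest _ (hp.takeUntil hx).reverse hadj (by simpa using h)))
    have hyP : y ∉ P.support := by
      rw [← hDec2, Walk.mem_support_append_iff]
      tauto
    obtain ⟨z, q, hq, hyq, hz⟩ := aux_leaf hforest (root vc) y (Fintype.card ↥Wᶜ) y
      (Walk.cons hadj.symm Q) (hQp.cons hyQ) (by simp) (by omega)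
    have hzu : z ≠ uc := by
      rintro rfl
      have : q = P := congrArg Subtype.val (hforest.path_unique ⟨q, hq⟩ ⟨P, hP⟩)
      exact hyP (this ▸ hyq)
    have hxq : x ∈ q.support := by
      have h1 : q.dropUntil y hyq = Walk.cons hadj.symm Q :=
        congrArg Subtype.val (hforest.path_unique ⟨_, hq.dropUntil hyq⟩ ⟨_, hQp.cons hyQ⟩)
      apply q.support_dropUntil_subset hyq
      rw [h1]
      simp
    have hrz : root z = root vc := by
      have h1 := hconst _ _ q.reachable
      have h2 := hconst _ _ (hreach vc)
      rw [h1, ← h2]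
    have hzW := hnoW z (aux_sub hforest root hrz q hq hxq) hzu
    have hzsub : G.neighborSet (z : V) ⊆ {((q.snd : ↥Wᶜ) : V)} := by
      intro n hn
      have hnW : n ∈ Wᶜ := fun h => hzW ⟨n, h, hn⟩
      have := hz ⟨n, hnW⟩ hn
      simp [← this]
    have h1 := Set.ncard_le_ncard hzsub (Set.toFinite _)
    rw [Set.ncard_singleton] at h1
    have := hdeg z
    omega
  exact (Set.ncard_le_ncard hsub (Set.toFinite _)).trans ((Set.ncard_insert_le _ _).trans (by rw [Set.ncard_singleton]))
end

section
/- Let G = (V, E_1, …, E_α) be an α-edge-colored graph, let i ∈ {1, …, α}, and suppose the color-i graph G_i contains a v-flower of order k+1 for some vertex v, i.e., k+1 cycles of G_i whose pairwise intersection of vertex sets is exactly {v}. Then every α-simultaneous feedback vertex set of G of size at most k contains v; consequently, G has an α-simultaneous feedback vertex set of size at most k if and only if G − v has an α-simultaneous feedback vertex set of size at most k − 1. (Safeness of reduction rule α-SimFVS.R6.) -/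
open SimpleGraph

theorem simfvs_hits {V : Type*} {H : SimpleGraph V} {S : Set V} (h : (H.induce Sᶜ).IsAcyclic)
    {v : V} (c : H.Walk v v) (hc : c.IsCycle) : ∃ x ∈ S, x ∈ c.support := by
  by_contra! hn
  have hs : ∀ x ∈ c.support, x ∈ Sᶜ := fun x hx hS => hn x hS hx
  refine h (c.induce Sᶜ hs) ?_
  rw [← Walk.isCycle_map_iff_of_injective (f := (Embedding.induce (G := H) Sᶜ).toHom)
    Subtype.val_injective]
  have := Walk.map_induce (w := c) hs
  rw [this]
  exact hc

/-- Safeness of reduction rule α-SimFVS.R6: if the color-`i` graph contains a `v`-flower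
of order `k+1` (that is, `k+1` cycles whose pairwise intersection of vertex sets is exactly
`{v}`), then every α-simultaneous feedback vertex set of size at most `k` contains `v`;
consequently, `G` has an α-simfvs of size at most `k` iff `G − v` has an α-simfvs of
size at most `k − 1`. -/
theorem alphaSimFVS_R6_safe {V : Type*} [Fintype V] [DecidableEq V] {α : ℕ}
    (G : Fin α → SimpleGraph V) (i : Fin α) (v : V) (k : ℕ)
    (C : Fin (k + 1) → (G i).Walk v v)
    (hcyc : ∀ j, (C j).IsCycle)
    (hflower : ∀ j j', j ≠ j' →
      {x | x ∈ (C j).support} ∩ {x | x ∈ (C j').support} = {v}) :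
    (∀ S : Finset V, S.card ≤ k → IsSimFVS G ↑S → v ∈ S) ∧
    ((∃ S : Finset V, S.card ≤ k ∧ IsSimFVS G ↑S) ↔
      (∃ S' : Finset ↥{x : V | x ≠ v}, (S'.card : ℤ) ≤ (k : ℤ) - 1 ∧
        IsSimFVS (fun j => (G j).induce {x : V | x ≠ v}) ↑S')) := by
  have key : ∀ S : Finset V, S.card ≤ k → IsSimFVS G ↑S → v ∈ S := by
    intro S hS hF
    by_contra hv
    have h1 : ∀ j, ∃ x ∈ S, x ∈ (C j).support := fun j => by
      simpa using simfvs_hits (hF i) (C j) (hcyc j)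
    choose f hf hf' using h1
    have inj : Function.Injective f := by
      intro a b hab
      by_contra hne
      have hm : f a ∈ ({v} : Set V) := by
        rw [← hflower a b hne]
        exact ⟨hf' a, by rw [hab]; exact hf' b⟩
      rw [Set.mem_singleton_iff] at hm
      exact hv (hm ▸ hf a)
    have := Finset.card_le_card_of_injOn (s := Finset.univ) (t := S) f
      (fun a _ => hf a) inj.injOn
    simp at this
    omega
  refine ⟨key, ?_, ?_⟩
  · rintro ⟨S, hS, hF⟩
    have hv := key S hS hF
    refine ⟨Finset.univ.filter (fun x => x.1 ∈ S), ?_, ?_⟩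
    · have h2 : (Finset.univ.filter (fun x : ↥{x : V | x ≠ v} => x.1 ∈ S)).card
          ≤ (S.erase v).card := by
        apply Finset.card_le_card_of_injOn Subtype.val
        · intro x hx
          have hx2 : x.1 ≠ v := x.2
          have hx1 : x.1 ∈ S := by simpa using hx
          exact Finset.mem_coe.2 (Finset.mem_erase.2 ⟨hx2, hx1⟩)
        · exact Subtype.val_injective.injOn
      have h3 := Finset.card_erase_add_one hv
      omega
    · intro j
      refine (hF j).comap ⟨fun x => ⟨x.1.1, fun h => x.2 (by simpa using h)⟩, ?_⟩ ?_
      · intro a b hab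
        exact hab
      · intro a b hab
        apply Subtype.ext
        apply Subtype.ext
        exact congrArg (fun z => z.1) hab
  · rintro ⟨S', hS, hF⟩
    refine ⟨insert v (S'.map ⟨Subtype.val, Subtype.val_injective⟩), ?_, ?_⟩
    · have := Finset.card_insert_le v (S'.map ⟨Subtype.val, Subtype.val_injective⟩)
      rw [Finset.card_map] at this
      omega
    · intro j
      refine (hF j).comap ⟨fun x => ⟨⟨x.1, fun h => x.2 (by simp [h])⟩, fun h => x.2
        (Finset.mem_coe.2 (Finset.mem_insert_of_mem
          (Finset.mem_map.2 ⟨_, Finset.mem_coe.1 h, rfl⟩)))⟩, ?_⟩ ?_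
      · intro a b hab
        exact hab
      · intro a b hab
        apply Subtype.ext
        exact congrArg (fun z => z.1.1) hab
end

section
/- For i ∈ {1,2}, let C_i be a finite family of nonempty finite sets that are pairwise disjoint within C_i (i.e., any two distinct members of C_i are disjoint). Let G_M be the bipartite graph whose vertex set is the disjoint union of C_1 and C_2, with an edge between A ∈ C_1 and B ∈ C_2 if and only if A ∩ B ≠ ∅. Then for every nonnegative integer k, there exists a set H ⊆ ⋃(C_1 ∪ C_2) with |H| ≤ k such that H ∩ A ≠ ∅ for every A ∈ C_1 ∪ C_2, if and only if G_M has a matching M such that |M| + |V(G_M) ∖ V(M)| ≤ k, where V(M) denotes the set of vertices covered by the matching M. -/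
open SimpleGraph

/-- The bipartite graph `G_M` whose vertex set is the disjoint union of the families
`C₁` and `C₂`, with an edge between `A ∈ C₁` and `B ∈ C₂` iff `A ∩ B ≠ ∅`. -/
def GM {U : Type*} [DecidableEq U] (C₁ C₂ : Finset (Finset U)) :
    SimpleGraph ({A // A ∈ C₁} ⊕ {B // B ∈ C₂}) :=
  SimpleGraph.fromRel (fun x y =>
    ∃ (a : {A // A ∈ C₁}) (b : {B // B ∈ C₂}),
      x = Sum.inl a ∧ y = Sum.inr b ∧ (a.1 ∩ b.1).Nonempty)

def stV {U : Type*} (C₁ C₂ : Finset (Finset U)) : {A // A ∈ C₁} ⊕ {B // B ∈ C₂} → Finset U :=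
  Sum.elim Subtype.val Subtype.val

theorem GM_adj {U : Type*} [DecidableEq U] {C₁ C₂ : Finset (Finset U)}
    {v w : {A // A ∈ C₁} ⊕ {B // B ∈ C₂}} :
    (GM C₁ C₂).Adj v w ↔ v.isLeft ≠ w.isLeft ∧ (stV C₁ C₂ v ∩ stV C₁ C₂ w).Nonempty := by
  rcases v with a | b <;> rcases w with c | d <;>
    simp [GM, SimpleGraph.fromRel_adj, stV, Finset.inter_comm]

theorem count_eq {U : Type*} [DecidableEq U] {C₁ C₂ : Finset (Finset U)}
    (M : (GM C₁ C₂).Subgraph) (hM : M.IsMatching) :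
    M.edgeSet.ncard + M.vertsᶜ.ncard = {v | v.isLeft = true ∨ v ∉ M.verts}.ncard := by
  have h1 : {v | v.isLeft = true ∧ v ∈ M.verts}.ncard = M.edgeSet.ncard := by
    choose p hp hu using hM
    refine Set.ncard_congr (fun v hv => s(v, p hv.2)) ?_ ?_ ?_
    · intro v hv
      exact hp hv.2
    · intro v w hv hw h
      rw [Sym2.eq_iff] at h
      rcases h with h | h
      · exact h.1
      · have h3 := (GM_adj.1 (M.adj_sub (hp hw.2))).1
        rw [← h.1, hv.1, hw.1] at h3
        exact absurd rfl h3
    · intro e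
      induction e using Sym2.ind with
      | _ x y =>
        intro he
        have he : M.Adj x y := he
        have h3 := (GM_adj.1 (M.adj_sub he)).1
        by_cases hx : x.isLeft = true
        · refine ⟨x, ⟨hx, M.edge_vert he⟩, ?_⟩
          rw [← hu (M.edge_vert he) y he]
        · have hy : y.isLeft = true := by
            by_contra hy
            simp_all
          refine ⟨y, ⟨hy, M.edge_vert he.symm⟩, ?_⟩
          rw [← hu (M.edge_vert he.symm) x he.symm, Sym2.eq_swap]
  rw [← h1, ← Set.ncard_union_eq]
  · congr 1
    ext v
    simp only [Set.mem_union, Set.mem_ofPred_eq, Set.mem_compl_iff]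
    tauto
  · rw [Set.disjoint_left]
    intro v hv hv'
    exact hv' hv.2

/-- For families `C₁`, `C₂` of nonempty finite sets, pairwise disjoint within each family,
there is a hitting set `H ⊆ ⋃ (C₁ ∪ C₂)` of size at most `k` meeting every member of
`C₁ ∪ C₂` iff the bipartite graph `G_M` has a matching `M` with
`|M| + |V(G_M) ∖ V(M)| ≤ k`. -/
theorem hittingSet_iff_matching {U : Type*} [DecidableEq U]
    (C₁ C₂ : Finset (Finset U))
    (h1ne : ∀ A ∈ C₁, A.Nonempty) (h2ne : ∀ B ∈ C₂, B.Nonempty)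
    (h1disj : ∀ A ∈ C₁, ∀ A' ∈ C₁, A ≠ A' → Disjoint A A')
    (h2disj : ∀ B ∈ C₂, ∀ B' ∈ C₂, B ≠ B' → Disjoint B B')
    (k : ℕ) :
    (∃ H : Finset U, H ⊆ (C₁ ∪ C₂).biUnion id ∧ H.card ≤ k ∧
      ∀ A ∈ C₁ ∪ C₂, (H ∩ A).Nonempty) ↔
    (∃ M : (GM C₁ C₂).Subgraph, M.IsMatching ∧
      M.edgeSet.ncard + M.vertsᶜ.ncard ≤ k) := by
  classical
  have inj : ∀ v w : {A // A ∈ C₁} ⊕ {B // B ∈ C₂}, ∀ u, u ∈ stV C₁ C₂ v → u ∈ stV C₁ C₂ w →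
      v.isLeft = w.isLeft → v = w := by
    rintro (⟨a, ha⟩ | ⟨a, ha⟩) (⟨b, hb⟩ | ⟨b, hb⟩) u hv hw h <;> simp [stV] at *
    · by_contra hne
      exact Finset.disjoint_left.1 (h1disj a ha b hb hne) hv hw
    · by_contra hne
      exact Finset.disjoint_left.1 (h2disj a ha b hb hne) hv hw
  have hmem : ∀ v, stV C₁ C₂ v ∈ C₁ ∪ C₂ := by
    rintro (⟨a, ha⟩ | ⟨a, ha⟩) <;> simp [stV, ha]
  have hsurj : ∀ A ∈ C₁ ∪ C₂, ∃ v, stV C₁ C₂ v = A := by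
    intro A hA
    rcases Finset.mem_union.1 hA with h | h
    · exact ⟨Sum.inl ⟨A, h⟩, rfl⟩
    · exact ⟨Sum.inr ⟨A, h⟩, rfl⟩
  have hne : ∀ v, (stV C₁ C₂ v).Nonempty := by
    rintro (⟨a, ha⟩ | ⟨a, ha⟩)
    · exact h1ne a ha
    · exact h2ne a ha
  constructor
  · rintro ⟨H, -, hk, hH⟩
    have hex : ∀ v, ∃ u, u ∈ H ∧ u ∈ stV C₁ C₂ v := by
      intro v
      obtain ⟨u, hu⟩ := hH _ (hmem v)
      exact ⟨u, Finset.mem_inter.1 hu⟩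
    choose f hfH hf using hex
    let M : (GM C₁ C₂).Subgraph :=
      { verts := {v | ∃ w, v.isLeft ≠ w.isLeft ∧ f v = f w}
        Adj := fun v w => v.isLeft ≠ w.isLeft ∧ f v = f w
        adj_sub := by
          intro v w h
          refine GM_adj.2 ⟨h.1, f v, Finset.mem_inter.2 ⟨hf v, ?_⟩⟩
          rw [h.2]
          exact hf w
        edge_vert := fun {v w} h => ⟨w, h⟩
        symm := ⟨fun v w h => ⟨h.1.symm, h.2.symm⟩⟩ }
    have hM : M.IsMatching := by
      rintro v ⟨w, hw⟩
      refine ⟨w, hw, ?_⟩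
      rintro x ⟨hx1, hx2⟩
      refine inj x w (f x) (hf x) ?_ ?_
      · rw [← hx2, hw.2]
        exact hf w
      · have := hw.1
        revert this hx1
        cases v.isLeft <;> cases w.isLeft <;> cases x.isLeft <;> simp
    refine ⟨M, hM, ?_⟩
    rw [count_eq M hM]
    refine le_trans ?_ hk
    rw [← Set.ncard_coe_finset]
    refine Set.ncard_le_ncard_of_injOn f (fun v _ => hfH v) ?_ H.finite_toSet
    intro v hv w hw h
    by_cases hl : v.isLeft = w.isLeft
    · exact inj v w (f v) (hf v) (h ▸ hf w) hl
    · exfalso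
      have hv1 : v ∈ M.verts := ⟨w, hl, h⟩
      have hw1 : w ∈ M.verts := ⟨v, fun e => hl e.symm, h.symm⟩
      have hv2 := hv.resolve_right (fun h => h hv1)
      have hw2 := hw.resolve_right (fun h => h hw1)
      exact hl (hv2.trans hw2.symm)
  · rintro ⟨M, hM, hk⟩
    rw [count_eq M hM] at hk
    have hex : ∀ v, ∃ u, u ∈ stV C₁ C₂ v ∧ ∀ w, M.Adj v w → u ∈ stV C₁ C₂ w := by
      intro v
      by_cases hv : v ∈ M.verts
      · obtain ⟨w, hw, hu⟩ := hM hv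
        obtain ⟨u, h⟩ := (GM_adj.1 (M.adj_sub hw)).2
        rw [Finset.mem_inter] at h
        refine ⟨u, h.1, fun x hx => ?_⟩
        rw [hu x hx]
        exact h.2
      · obtain ⟨u, h⟩ := hne v
        exact ⟨u, h, fun w hw => absurd (M.edge_vert hw) hv⟩
    choose g hg hgw using hex
    have hfin : {v | v.isLeft = true ∨ v ∉ M.verts}.Finite := Set.toFinite _
    refine ⟨hfin.toFinset.image g, ?_, ?_, ?_⟩
    · intro u hu
      obtain ⟨v, -, rfl⟩ := Finset.mem_image.1 hu
      exact Finset.mem_biUnion.2 ⟨_, hmem v, hg v⟩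
    · rw [Set.ncard_eq_toFinset_card _ hfin] at hk
      exact Finset.card_image_le.trans hk
    · intro A hA
      obtain ⟨v, rfl⟩ := hsurj A hA
      by_cases hv : v.isLeft = true ∨ v ∉ M.verts
      · exact ⟨g v, Finset.mem_inter.2
          ⟨Finset.mem_image_of_mem g (hfin.mem_toFinset.2 hv), hg v⟩⟩
      · push Not at hv
        obtain ⟨w, hw, -⟩ := hM hv.2
        have h3 := (GM_adj.1 (M.adj_sub hw)).1
        have hw1 : w.isLeft = true := by
          have h4 := hv.1
          revert h3 h4
          cases v.isLeft <;> cases w.isLeft <;> simp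
        exact ⟨g w, Finset.mem_inter.2
          ⟨Finset.mem_image_of_mem g (hfin.mem_toFinset.2 (Or.inl hw1)), hgw w v hw.symm⟩⟩
end

section
/- Let G be a simple graph, let v and h be two distinct vertices of G, and suppose G contains at least k+2 internally vertex-disjoint paths between v and h, each of length at least 2. Then every feedback vertex set S of G with |S| ≤ k contains v or contains h. -/
open SimpleGraph

/-- If a simple graph `G` contains at least `k+2` internally vertex-disjoint paths between
two distinct vertices `v` and `h`, each of length at least 2, then every feedback vertex set
of `G` of size at most `k` contains `v` or `h`. -/
theorem fvs_contains_v_or_h {V : Type*} [Fintype V] [DecidableEq V] (G : SimpleGraph V)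
    (v h : V) (hvh : v ≠ h) (k : ℕ)
    (P : Fin (k + 2) → G.Walk v h)
    (hpath : ∀ j, (P j).IsPath)
    (hlen : ∀ j, 2 ≤ (P j).length)
    (hdisj : ∀ j j', j ≠ j' → ∀ x, x ∈ (P j).support → x ∈ (P j').support →
      x = v ∨ x = h)
    (S : Finset V) (hS : S.card ≤ k)
    (hfvs : (G.induce (↑S : Set V)ᶜ).IsAcyclic) :
    v ∈ S ∨ h ∈ S := by
  by_contra hcon
  push Not at hcon
  obtain ⟨hv, hh⟩ := hcon
  classical
  let B : Finset (Fin (k + 2)) := Finset.univ.filter (fun j => ∃ x ∈ S, x ∈ (P j).support)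
  have hB : B.card ≤ S.card := by
    have hex : ∀ j ∈ B, ∃ x ∈ S, x ∈ (P j).support := fun j hj => (Finset.mem_filter.1 hj).2
    haveI : Nonempty V := ⟨v⟩
    choose! f hfS hfP using hex
    refine Finset.card_le_card_of_injOn f hfS ?_
    intro a ha b hb hab
    by_contra hne
    have h1 := hfP a ha
    have h2 := hfP b hb
    rw [← hab] at h2
    have h3 := hfS a ha
    rcases hdisj a b hne _ h1 h2 with e | e
    · exact hv (e ▸ h3)
    · exact hh (e ▸ h3)
  have hBc : 1 < Bᶜ.card := by
    rw [Finset.card_compl, Fintype.card_fin]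
    omega
  obtain ⟨i, hi, j, hj, hij⟩ := Finset.one_lt_card.1 hBc
  have good : ∀ j ∈ Bᶜ, ∀ x ∈ (P j).support, x ∈ ((↑S : Set V)ᶜ) := by
    intro j hj x hx hxS
    exact (Finset.mem_compl.1 hj) (Finset.mem_filter.2 ⟨Finset.mem_univ _, x, hxS, hx⟩)
  have hpi : ∀ j (hj : j ∈ Bᶜ), ((P j).induce _ (good j hj)).IsPath := by
    intro j hj
    apply Walk.IsPath.of_map (f := (Embedding.induce (G := G) ((↑S : Set V)ᶜ)).toHom)
    rw [Walk.map_induce]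
    exact hpath j
  have heq := (hfvs.subsingleton_path _ _).elim ⟨_, hpi i hi⟩ ⟨_, hpi j hj⟩
  have heq2 : P i = P j := by
    have h1 := congrArg (fun p => p.1.map (Embedding.induce (G := G) ((↑S : Set V)ᶜ)).toHom) heq
    simp only [Walk.map_induce] at h1
    exact h1
  have hx := (P i).getVert_mem_support 1
  have hl := hlen i
  have inj := (hpath i).getVert_injOn
  rcases hdisj i j hij _ hx (heq2 ▸ hx) with e | e
  · have := inj (x₁ := 1) (x₂ := 0) (by simp; omega) (by simp) (by simp [e])
    omega
  · have := inj (x₁ := 1) (x₂ := (P i).length) (by simp; omega) (by simp) (by simp [e])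
    omega
end

section
/- Let G = (V, E_1, …, E_α) be an α-edge-colored graph, let u ∈ V, and let x ∈ V ∖ {u} be a vertex such that for every i ∈ {1, …, α}, every cycle of the color-i graph G_i that contains u also contains x. Let G' be the α-edge-colored graph obtained from G by splitting u into α new vertices u_1, …, u_α: the vertex set of G' is (V ∖ {u}) ∪ {u_1, …, u_α}, and for each i, every edge (u, y) ∈ E_i is replaced by the edge (u_i, y), all other edges being unchanged. Then for every nonnegative integer k, G has an α-simultaneous feedback vertex set of size at most k if and only if G' has an α-simultaneous feedback vertex set of size at most k. (Safeness of the Unravel operation, reduction rule α-SimFVS.R8; in the paper, x is a second vertex of the Intercept of a maximal degree-two path with a tuple of paths of the other colors.) -/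
open SimpleGraph

/-- The color-`j` graph obtained from `G` by splitting the vertex `u` into `α` copies
`u_1, …, u_α` (here the copies are the elements of `Fin α`): edges among vertices other
than `u` are unchanged, and every color-`j` edge `(u, y)` is replaced by `(u_j, y)`. -/
def SplitGraph {V : Type*} {α : ℕ} (G : Fin α → SimpleGraph V) (u : V) (j : Fin α) :
    SimpleGraph ({x : V // x ≠ u} ⊕ Fin α) :=
  SimpleGraph.fromRel (fun a b =>
    (∃ x y : {x : V // x ≠ u}, a = Sum.inl x ∧ b = Sum.inl y ∧ (G j).Adj x.1 y.1) ∨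
    (∃ y : {x : V // x ≠ u}, a = Sum.inl y ∧ b = Sum.inr j ∧ (G j).Adj u y.1))

theorem lift_walk_aux {V W : Type*} {G : SimpleGraph V} {H : SimpleGraph W} (f : G ↪g H)
    {p q : W} (w : H.Walk p q) (hs : ∀ v ∈ w.support, v ∈ Set.range f) :
    ∀ a b (ha : p = f a) (hb : q = f b),
      ∃ w' : G.Walk a b, w'.map f.toHom = w.copy ha hb := by
  induction w with
  | nil =>
    intro a b ha hb
    have : a = b := f.injective (ha.symm.trans hb)
    subst this
    subst ha
    exact ⟨Walk.nil, rfl⟩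
  | @cons p r q h w ih =>
    intro a b ha hb
    obtain ⟨d, hd⟩ := hs r (by simp)
    obtain ⟨w', hw'⟩ := ih (fun v hv => hs v (by simp [hv])) d b hd.symm hb
    subst ha hb hd
    refine ⟨Walk.cons (f.map_adj_iff.1 h) w', ?_⟩
    simp only [Walk.map_cons, hw', Walk.copy_rfl_rfl]

theorem lift_cycle_aux {V W : Type*} {G : SimpleGraph V} {H : SimpleGraph W} (f : G ↪g H)
    {p : W} (w : H.Walk p p) (hw : w.IsCycle) (hs : ∀ v ∈ w.support, v ∈ Set.range f) :
    ∃ (a : V) (c : G.Walk a a), c.IsCycle ∧ ∀ v ∈ c.support, f v ∈ w.support := by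
  obtain ⟨a, rfl⟩ := hs p (by simp)
  obtain ⟨c, hc⟩ := lift_walk_aux f w hs a a rfl rfl
  simp only [Walk.copy_rfl_rfl] at hc
  subst hc
  refine ⟨a, c, (Walk.isCycle_map_iff_of_injective f.injective).1 hw, ?_⟩
  intro v hv
  rw [Walk.support_map]
  exact List.mem_map_of_mem hv

theorem acyclic_induce_iff {V : Type*} (G : SimpleGraph V) (S : Set V) :
    (G.induce Sᶜ).IsAcyclic ↔
      ∀ (a : V) (c : G.Walk a a), c.IsCycle → ∃ v ∈ c.support, v ∈ S := by
  constructor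
  · intro h a c hc
    by_contra! hn
    obtain ⟨b, d, hd, -⟩ := lift_cycle_aux (SimpleGraph.Embedding.induce (G := G) Sᶜ) c hc
      (fun v hv => ⟨⟨v, hn v hv⟩, rfl⟩)
    exact h d hd
  · intro h a c hc
    obtain ⟨v, hv, hvS⟩ := h _ (c.map (SimpleGraph.Embedding.induce (G := G) Sᶜ).toHom)
      (hc.map (SimpleGraph.Embedding.induce (G := G) Sᶜ).injective)
    rw [Walk.support_map, List.mem_map] at hv
    obtain ⟨y, -, rfl⟩ := hv
    exact y.2 hvS

/-- The embedding of the color-`j` graph into the split graph. -/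
def splitEmb {V : Type*} [DecidableEq V] {α : ℕ} (G : Fin α → SimpleGraph V) (u : V)
    (j : Fin α) : G j ↪g SplitGraph G u j where
  toFun v := if h : v = u then Sum.inr j else Sum.inl ⟨v, h⟩
  inj' := by
    intro a b h
    by_cases ha : a = u <;> by_cases hb : b = u <;> simp_all
  map_rel_iff' := by
    intro a b
    by_cases ha : a = u <;> by_cases hb : b = u <;>
      simp [SplitGraph, ha, hb, SimpleGraph.adj_comm]
    intro h
    exact h.ne

theorem splitEmb_range {V : Type*} [DecidableEq V] {α : ℕ} (G : Fin α → SimpleGraph V) (u : V)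
    (j : Fin α) {p q} (h : (SplitGraph G u j).Adj p q) : p ∈ Set.range (splitEmb G u j) := by
  have key : (∃ y : {x : V // x ≠ u}, p = Sum.inl y) ∨ p = Sum.inr j := by
    simp only [SplitGraph, SimpleGraph.fromRel_adj] at h
    grind
  rcases key with ⟨y, rfl⟩ | rfl
  · exact ⟨y.1, by simp [splitEmb, y.2]⟩
  · exact ⟨u, by simp [splitEmb]⟩

theorem adj_of_mem_aux {W : Type*} {H : SimpleGraph W} {p q : W} (w : H.Walk p q)
    (hw : ¬ w.Nil) : ∀ v ∈ w.support, ∃ t, H.Adj v t := by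
  induction w with
  | nil => simp at hw
  | @cons p r q h w ih =>
    intro v hv
    rw [Walk.support_cons, List.mem_cons] at hv
    rcases hv with rfl | hv
    · exact ⟨_, h⟩
    · by_cases hn : w.Nil
      · rw [Walk.nil_iff_support_eq.1 hn] at hv
        simp at hv
        subst hv
        exact ⟨_, h.symm⟩
      · exact ih hn v hv

/-- Safeness of the Unravel operation (reduction rule α-SimFVS.R8): if `x ≠ u` is a vertex
such that for every color `i`, every cycle of `G i` containing `u` also contains `x`, then
splitting `u` into `α` private copies (one per color) preserves the existence of an
α-simultaneous feedback vertex set of size at most `k`. -/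
theorem unravel_safe {V : Type*} [Fintype V] [DecidableEq V] {α : ℕ}
    (G : Fin α → SimpleGraph V) (u x : V) (hxu : x ≠ u)
    (hx : ∀ i : Fin α, ∀ (a : V) (c : (G i).Walk a a), c.IsCycle →
      u ∈ c.support → x ∈ c.support)
    (k : ℕ) :
    (∃ S : Finset V, S.card ≤ k ∧ IsSimFVS G ↑S) ↔
    (∃ S' : Finset ({y : V // y ≠ u} ⊕ Fin α), S'.card ≤ k ∧
      IsSimFVS (fun j => SplitGraph G u j) ↑S') := by
  classical
  simp only [IsSimFVS, acyclic_induce_iff]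
  constructor
  · rintro ⟨S, hk, hS⟩
    obtain ⟨T, hTk, huT, hT⟩ : ∃ T : Finset V, T.card ≤ k ∧ u ∉ T ∧
        ∀ i (a : V) (c : (G i).Walk a a), c.IsCycle → ∃ v ∈ c.support, v ∈ T := by
      by_cases hu : u ∈ S
      · refine ⟨insert x (S.erase u), ?_, by simp [hxu.symm], ?_⟩
        · have h1 := Finset.card_insert_le x (S.erase u)
          have h2 := Finset.card_erase_add_one hu
          omega
        · intro i a c hc
          obtain ⟨v, hv, hvS⟩ := hS i a c hc
          by_cases hvu : v = u
          · subst hvu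
            exact ⟨x, hx i a c hc hv, by simp⟩
          · exact ⟨v, hv, by
              simp only [Finset.mem_insert, Finset.mem_erase]
              exact Or.inr ⟨hvu, by simpa using hvS⟩⟩
      · exact ⟨S, hk, hu, fun i a c hc => by simpa using hS i a c hc⟩
    refine ⟨(T.subtype (fun y => y ≠ u)).image Sum.inl, ?_, ?_⟩
    · refine Finset.card_image_le.trans ?_
      rw [Finset.card_subtype]
      exact (Finset.card_filter_le _ _).trans hTk
    · intro i p w hw
      obtain ⟨a, c, hc, hcw⟩ := lift_cycle_aux (splitEmb G u i) w hw (fun v hv => by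
        obtain ⟨t, ht⟩ := adj_of_mem_aux w hw.not_nil v hv
        exact splitEmb_range G u i ht)
      obtain ⟨v, hv, hvT⟩ := hT i a c hc
      refine ⟨_, hcw v hv, ?_⟩
      have hvu : v ≠ u := fun h => huT (h ▸ hvT)
      simp [splitEmb, hvu, hvT]
  · rintro ⟨S', hk, hS'⟩
    refine ⟨S'.image (Sum.elim (fun y => y.1) (fun _ => u)), Finset.card_image_le.trans hk, ?_⟩
    intro i a c hc
    obtain ⟨v, hv, hvS⟩ := hS' i _ (c.map (splitEmb G u i).toHom)
      (hc.map (splitEmb G u i).injective)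
    rw [Walk.support_map, List.mem_map] at hv
    obtain ⟨y, hy, rfl⟩ := hv
    refine ⟨y, hy, ?_⟩
    rw [Finset.mem_coe, Finset.mem_image]
    refine ⟨_, hvS, ?_⟩
    by_cases hyu : y = u
    · simp [splitEmb, hyu]
    · simp [splitEmb, hyu]
end

section
/- Let U be a finite universe and let F = F_1 ∪ … ∪ F_α be a family of nonempty subsets of U such that every element of U belongs to at least one set of F and, for each i ∈ {1, …, α}, the sets within the subfamily F_i are pairwise disjoint. Then there exists an α-edge-colored graph G on at most 2|U|·|F| vertices such that for every positive integer k, F has a hitting set of size at most k if and only if G has an α-simultaneous feedback vertex set of size at most k. (Combinatorial core of the reduction proving that O(log n)-SimFVS is W[1]-hard.) -/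
open SimpleGraph

theorem acyclic_of_rank {W : Type*} (G : SimpleGraph W) (r : W → ℕ)
    (hr : ∀ x y, G.Adj x y → r x ≠ r y)
    (hu : ∀ x y z, G.Adj x y → G.Adj x z → r y < r x → r z < r x → y = z) : G.IsAcyclic := by
  classical
  intro v c hc
  obtain ⟨u, hu1, hmax⟩ := c.support.toFinset.exists_max_image r ⟨v, by simp⟩
  have hu1' : u ∈ c.support := by simpa using hu1
  have hc' : (c.rotate u hu1').IsCycle := hc.rotate hu1'
  set d := c.rotate u hu1' with hd
  have hle : ∀ w ∈ d.support, r w ≤ r u := by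
    intro w hw
    apply hmax
    rw [hd, Walk.mem_support_rotate_iff] at hw
    simpa using hw
  have h1 := d.adj_snd hc'.not_nil
  have h2 := (d.adj_penultimate hc'.not_nil).symm
  have m1 : d.snd ∈ d.support := d.getVert_mem_support _
  have m2 : d.penultimate ∈ d.support := d.getVert_mem_support _
  exact hc'.snd_ne_penultimate (hu u _ _ h1 h2
    (lt_of_le_of_ne (hle _ m1) (hr _ _ h1).symm) (lt_of_le_of_ne (hle _ m2) (hr _ _ h2).symm))

def cycUnion {V ι : Type*} (m : ι → ℕ) (e : ∀ j, Fin (m j + 2) → V) : SimpleGraph V where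
  Adj x y := x ≠ y ∧ ∃ j a b, (cycleGraph (m j + 2)).Adj a b ∧ x = e j a ∧ y = e j b
  symm := ⟨fun _ _ ⟨h, j, a, b, hab, hx, hy⟩ => ⟨h.symm, j, b, a, hab.symm, hy, hx⟩⟩
  loopless := ⟨fun _ h => h.1 rfl⟩

theorem rank_succ {n : ℕ} {a b p : Fin (n + 2)} (h : a - b = 1) (ha : a ≠ p) :
    (a - p).val = (b - p).val + 1 := by
  have h1 : a - p = (b - p) + 1 := by rw [← h]; abel
  have h2 : a - p ≠ 0 := sub_ne_zero.mpr ha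
  rw [h1] at h2 ⊢
  rw [Fin.val_add_one]
  split_ifs with h3
  · exact absurd (by rw [h3]; simp) h2
  · rfl

theorem cycUnion_acyclic {V ι : Type*} (m : ι → ℕ) (e : ∀ j, Fin (m j + 2) → V)
    (hinj : Function.Injective (fun s : Σ j, Fin (m j + 2) => e s.1 s.2))
    (S : Set V) (p : ∀ j, Fin (m j + 2)) (hp : ∀ j, e j (p j) ∈ S) :
    ((cycUnion m e).induce Sᶜ).IsAcyclic := by
  classical
  let r : V → ℕ := Function.extend (fun s : Σ j, Fin (m j + 2) => e s.1 s.2)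
    (fun s => (s.2 - p s.1).val) (fun _ => 0)
  have hrv : ∀ j a, r (e j a) = (a - p j).val := fun j a => hinj.extend_apply _ _ ⟨j, a⟩
  have key : ∀ x y : V, x ∉ S → y ∉ S → (cycUnion m e).Adj x y →
      ∃ j a b, x = e j a ∧ y = e j b ∧
        ((a - b = 1 ∧ r x = r y + 1) ∨ (b - a = 1 ∧ r y = r x + 1)) := by
    rintro x y hx hy ⟨-, j, a, b, hab, rfl, rfl⟩
    refine ⟨j, a, b, rfl, rfl, ?_⟩
    have ha : a ≠ p j := by rintro rfl; exact hx (hp j)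
    have hb : b ≠ p j := by rintro rfl; exact hy (hp j)
    rw [hrv, hrv]
    rcases cycleGraph_adj.mp hab with h | h
    · exact Or.inl ⟨h, rank_succ h ha⟩
    · exact Or.inr ⟨h, rank_succ h hb⟩
  refine acyclic_of_rank _ (fun x => r x.1) ?_ ?_
  · rintro ⟨x, hx⟩ ⟨y, hy⟩ h
    obtain ⟨j, a, b, -, -, h | h⟩ := key x y hx hy h <;> simp <;> omega
  · rintro ⟨x, hx⟩ ⟨y, hy⟩ ⟨z, hz⟩ h h' hlt hlt'
    simp only at hlt hlt'
    obtain ⟨j, a, b, hxa, hyb, h1⟩ := key x y hx hy h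
    obtain ⟨j', a', b', hxa', hyb', h2⟩ := key x z hx hz h'
    have h1' : a - b = 1 := by
      rcases h1 with h1 | h1
      · exact h1.1
      · omega
    have h2' : a' - b' = 1 := by
      rcases h2 with h2 | h2
      · exact h2.1
      · omega
    have hs : (⟨j, a⟩ : Σ j, Fin (m j + 2)) = ⟨j', a'⟩ := hinj (hxa.symm.trans hxa')
    cases hs
    have hbb : b = b' := by
      have : a - b = a - b' := h1'.trans h2'.symm
      exact sub_right_injective this
    subst hbb
    simp [hyb, hyb']

theorem cycUnion_hit {V ι : Type*} (m : ι → ℕ) (e : ∀ j, Fin (m j + 2) → V) (S : Set V)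
    (h : ((cycUnion m e).induce Sᶜ).IsAcyclic) (j : ι) (hm : 1 ≤ m j)
    (hinj : Function.Injective (e j)) : ∃ a, e j a ∈ S := by
  by_contra! hcon
  let f : cycleGraph (m j + 2) →g (cycUnion m e).induce Sᶜ :=
    ⟨fun a => ⟨e j a, hcon a⟩, fun {a b} hab => by
      change (cycUnion m e).Adj (e j a) (e j b)
      exact ⟨fun h => hab.ne (hinj h), j, a, b, hab, rfl, rfl⟩⟩
  have hf : Function.Injective f := fun a b hab => hinj (congrArg Subtype.val hab)
  obtain ⟨v, c, hc, -⟩ := (cycleGraph_isContained_iff (by omega)).mp ⟨⟨f, hf⟩⟩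
  exact h c hc

/-- Combinatorial core of the reduction proving that O(log n)-SimFVS is W[1]-hard: given an
α-partitioned family `F = F_1 ∪ … ∪ F_α` of nonempty subsets of a finite universe `U`
covering `U`, where the sets within each subfamily `Fam i` are pairwise disjoint, there is
an α-edge-colored graph `G` on at most `2|U|·|F|` vertices such that for every positive
integer `k`, `F` has a hitting set of size at most `k` iff `G` has an α-simultaneous
feedback vertex set of size at most `k`. -/
theorem partitionedHittingSet_to_simfvs {U : Type} [Fintype U] [DecidableEq U] {α : ℕ}
    (Fam : Fin α → Finset (Finset U))
    (hne : ∀ f ∈ Finset.univ.biUnion Fam, f.Nonempty)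
    (hcov : ∀ u : U, ∃ f ∈ Finset.univ.biUnion Fam, u ∈ f)
    (hdisj : ∀ i, ∀ f ∈ Fam i, ∀ g ∈ Fam i, f ≠ g → Disjoint f g) :
    ∃ (V : Type) (_ : Fintype V) (G : Fin α → SimpleGraph V),
      Fintype.card V ≤ 2 * Fintype.card U * (Finset.univ.biUnion Fam).card ∧
      ∀ k : ℕ, 1 ≤ k →
        ((∃ S : Finset U, S.card ≤ k ∧
            ∀ f ∈ Finset.univ.biUnion Fam, (S ∩ f).Nonempty) ↔
         (∃ T : Set V, T.ncard ≤ k ∧ IsSimFVS G T)) := by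
  classical
  by_cases hU : Fintype.card U ≤ 1
  · refine ⟨Empty, inferInstance, fun _ => ⊥, by simp, fun k hk => ⟨fun _ => ⟨∅, by simp, ?_⟩,
      fun _ => ⟨Finset.univ, ?_, ?_⟩⟩⟩
    · intro i v
      exact v.1.elim
    · rw [Finset.card_univ]; omega
    · intro f hf
      simpa using hne f hf
  · set F := Finset.univ.biUnion Fam with hF
    have hFpos : 1 ≤ F.card := by
      have : 0 < Fintype.card U := by omega
      obtain ⟨u⟩ := Fintype.card_pos_iff.mp this
      obtain ⟨f, hf, -⟩ := hcov u
      exact Finset.card_pos.mpr ⟨f, hf⟩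
    let V := U ⊕ ({f // f ∈ F} × Bool)
    let q : ∀ f : {f // f ∈ F}, Fin (f.1.card + 2) ≃ ({u // u ∈ f.1} ⊕ Bool) := fun f =>
      (Fintype.equivFinOfCardEq (by simp)).symm
    let g : ∀ f : {f // f ∈ F}, ({u // u ∈ f.1} ⊕ Bool) → V := fun f =>
      Sum.elim (fun u => Sum.inl u.1) (fun b => Sum.inr (f, b))
    let e : ∀ f : {f // f ∈ F}, Fin (f.1.card + 2) → V := fun f a => g f (q f a)
    have hg : ∀ f, Function.Injective (g f) := by
      rintro f (u | b) (u' | b') h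
      · exact congrArg Sum.inl (Subtype.ext (Sum.inl.inj h))
      · simp [g] at h
      · simp [g] at h
      · exact congrArg Sum.inr (congrArg Prod.snd (Sum.inr.inj h))
    have he : ∀ f, Function.Injective (e f) := fun f => (hg f).comp (q f).injective
    let G : Fin α → SimpleGraph V := fun i =>
      cycUnion (ι := {f : {f // f ∈ F} // f.1 ∈ Fam i}) (fun j => j.1.1.card) (fun j => e j.1)
    have hinj : ∀ i, Function.Injective
        (fun s : Σ j : {f : {f // f ∈ F} // f.1 ∈ Fam i}, Fin (j.1.1.card + 2) =>
          e s.1.1 s.2) := by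
      rintro i ⟨j, a⟩ ⟨j', a'⟩ h
      simp only at h
      have hjj : j = j' := by
        by_contra hne'
        have hne2 : j.1.1 ≠ j'.1.1 := fun h => hne' (Subtype.ext (Subtype.ext h))
        have hd := hdisj i _ j.2 _ j'.2 hne2
        simp only [e] at h
        generalize q j.1 a = x at h
        generalize q j'.1 a' = y at h
        rcases x with u | b <;> rcases y with u' | b'
        · replace h := Sum.inl.inj h
          exact Finset.disjoint_left.mp hd u.2 (h ▸ u'.2)
        · simp [g] at h
        · simp [g] at h
        · exact hne2 (congrArg (fun x => x.1.1) (Sum.inr.inj h))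
      subst hjj
      rw [he _ h]
    refine ⟨V, inferInstance, G, ?_, fun k hk => ⟨?_, ?_⟩⟩
    · simp only [V, Fintype.card_sum, Fintype.card_prod, Fintype.card_coe, Fintype.card_bool]
      push Not at hU
      obtain ⟨a, ha⟩ := Nat.exists_eq_add_of_le hU
      obtain ⟨b, hb⟩ := Nat.exists_eq_add_of_le hFpos
      rw [ha, hb]
      ring_nf
      nlinarith
    · rintro ⟨S, hS, hh⟩
      refine ⟨Sum.inl '' (S : Set U), ?_, fun i => ?_⟩
      · rw [Set.ncard_image_of_injective _ Sum.inl_injective, Set.ncard_coe_finset]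
        exact hS
      · have : ∀ j : {f : {f // f ∈ F} // f.1 ∈ Fam i}, ∃ a,
            e j.1 a ∈ (Sum.inl '' (S : Set U) : Set V) := by
          intro j
          obtain ⟨u, hu⟩ := hh j.1.1 j.1.2
          rw [Finset.mem_inter] at hu
          refine ⟨(q j.1).symm (Sum.inl ⟨u, hu.2⟩), u, hu.1, ?_⟩
          simp [e, g]
        choose p hp using this
        exact cycUnion_acyclic _ _ (hinj i) _ p hp
    · rintro ⟨T, hT, hfvs⟩
      let φ : V → U := Sum.elim id (fun x => (hne x.1.1 x.1.2).choose)
      refine ⟨(φ '' T).toFinset, ?_, fun f hf => ?_⟩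
      · rw [← Set.ncard_eq_toFinset_card']
        exact (Set.ncard_image_le).trans hT
      · obtain ⟨i, -, hi⟩ := Finset.mem_biUnion.mp hf
        obtain ⟨a, ha⟩ := cycUnion_hit _ _ T (hfvs i) ⟨⟨f, hf⟩, hi⟩
          (Finset.card_pos.mpr (hne f hf)) (he _)
        refine ⟨φ (e ⟨f, hf⟩ a), Finset.mem_inter.mpr ⟨by simpa using ⟨_, ha, rfl⟩, ?_⟩⟩
        simp only [e]
        generalize q ⟨f, hf⟩ a = x
        rcases x with u | b
        · exact u.2
        · exact (hne f hf).choose_spec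
end

section
/- Let H and G be simple graphs with V(G) = {g_1, …, g_ℓ}, let col: V(H) → {1, …, ℓ} be a coloring, and for each i ∈ {1, …, ℓ} let H_i be the subgraph of H induced by the vertices of color i. Assume that G is connected with maximum degree 3, that each H_i is an edgeless graph (independent set) on exactly 2^t vertices for some positive integer t, and that whenever (g_i, g_j) ∉ E(G) there are no edges of H between H_i and H_j. Then there exist a finite universe U with |U| = |V(H)| + |E(H)| and a family F of subsets of U with |F| ≤ 4t·|E(G)| + |E(G)| + ℓ that can be partitioned into 16t + 1 subfamilies, each consisting of pairwise disjoint sets, such that: (i) F admits a hitting set of size at most ℓ + |E(G)| if and only if there exists an injection inj: V(G) → V(H) with col(inj(g_i)) = i for every i ∈ {1, …, ℓ} and (inj(g_i), inj(g_j)) ∈ E(H) for every edge (g_i, g_j) ∈ E(G); and (ii) F admits no hitting set of size at most ℓ + |E(G)| − 1. (Combinatorial core of the reduction from Partitioned Subgraph Isomorphism proving W[1]-hardness of O(log(|U||F|))-Partitioned Hitting Set.) -/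
open SimpleGraph

lemma phs_transport {V : Type*} [Fintype V] {I K : Type*} [Fintype I] [Fintype K] {m : ℕ}
    (c0 : Fin m) (hK : Fintype.card K ≤ m) (R : I → V → Prop) (p : I → K)
    (hp : ∀ a b, a ≠ b → p a = p b → ∀ x, R a x → R b x → False) :
    ∃ (U : Type) (_ : Fintype U) (_ : DecidableEq U) (Fam : Finset (Finset U)),
      Fintype.card U = Fintype.card V ∧
      Fam.card ≤ Fintype.card I ∧
      (∃ part : Finset U → Fin m,
        ∀ f ∈ Fam, ∀ g ∈ Fam, f ≠ g → part f = part g → Disjoint f g) ∧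
      ∀ k : ℕ, (∃ S : Finset U, S.card ≤ k ∧ ∀ f ∈ Fam, (S ∩ f).Nonempty) ↔
        (∃ S : Finset V, S.card ≤ k ∧ ∀ a, ∃ x ∈ S, R a x) := by
  classical
  let φ := Fintype.equivFin V
  let s : I → Finset (Fin (Fintype.card V)) := fun a => Finset.univ.filter (fun u => R a (φ.symm u))
  obtain ⟨ι⟩ : Nonempty (K ↪ Fin m) := Function.Embedding.nonempty_of_card_le (by simpa using hK)
  refine ⟨Fin (Fintype.card V), inferInstance, inferInstance, Finset.univ.image s, by simp,
    Finset.card_image_le, ?_, ?_⟩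
  · by_cases hI : Nonempty I
    · obtain ⟨i0⟩ := hI
      refine ⟨fun f => if h : ∃ a, s a = f then ι (p h.choose) else ι (p i0), ?_⟩
      intro f hf g hg hne hpart
      have hf' : ∃ a, s a = f := by simpa using hf
      have hg' : ∃ a, s a = g := by simpa using hg
      simp only [hf', hg', dif_pos] at hpart
      have h1 := hf'.choose_spec
      have h2 := hg'.choose_spec
      have h3 := ι.injective hpart
      rw [Finset.disjoint_left]
      intro u hu hu'
      rw [← h1] at hu
      rw [← h2] at hu'
      simp only [s, Finset.mem_filter, Finset.mem_univ, true_and] at hu hu'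
      refine hp _ _ ?_ h3 _ hu hu'
      intro h
      apply hne
      rw [← h1, ← h2, h]
    · refine ⟨fun _ => c0, ?_⟩
      intro f hf
      obtain ⟨a, -⟩ := Finset.mem_image.1 hf
      exact absurd ⟨a⟩ hI
  · intro k
    constructor
    · rintro ⟨S, hS, h⟩
      refine ⟨S.map φ.symm.toEmbedding, by simpa using hS, fun a => ?_⟩
      obtain ⟨u, hu⟩ := h (s a) (by simp)
      simp only [s, Finset.mem_inter, Finset.mem_filter, Finset.mem_univ, true_and] at hu
      exact ⟨φ.symm u, by simpa using hu.1, hu.2⟩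
    · rintro ⟨S, hS, h⟩
      refine ⟨S.map φ.toEmbedding, by simpa using hS, fun f hf => ?_⟩
      obtain ⟨a, -, rfl⟩ := Finset.mem_image.1 hf
      obtain ⟨x, hx, hR⟩ := h a
      exact ⟨φ x, by simp [s, hx, hR]⟩

/-- incidence relation of the reduction -/
def phsR {W : Type*} {ℓ t : ℕ} (H : SimpleGraph W) (G : SimpleGraph (Fin ℓ)) (col : W → Fin ℓ)
    (bit : W → Fin t → Bool) :
    (Fin ℓ ⊕ G.edgeSet) ⊕ (G.Dart × Fin t × Bool) → W ⊕ H.edgeSet → Prop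
  | .inl (.inl i), .inl x => col x = i
  | .inl (.inl _), .inr _ => False
  | .inl (.inr _), .inl _ => False
  | .inl (.inr e), .inr f => (f : Sym2 W).map col = e
  | .inr (d, b, v), .inl x => col x = d.fst ∧ bit x b = v
  | .inr (d, b, v), .inr f => ∃ x y, (f : Sym2 W) = s(x, y) ∧ col x = d.fst ∧ col y = d.snd ∧
      bit x b ≠ v

lemma phs_bits {W : Type*} [Fintype W] {ℓ t : ℕ} (col : W → Fin ℓ)
    (hsize : ∀ i : Fin ℓ, {x : W | col x = i}.ncard = 2 ^ t) :
    ∃ bit : W → Fin t → Bool, ∀ x y, col x = col y → bit x = bit y → x = y := by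
  classical
  have : ∀ i, Nonempty ({x : W | col x = i} ↪ (Fin t → Bool)) := fun i => by
    apply Function.Embedding.nonempty_of_card_le
    rw [← Nat.card_eq_fintype_card, Nat.card_coe_set_eq, hsize i]
    simp
  have f := fun i => (this i).some
  refine ⟨fun x => f (col x) ⟨x, rfl⟩, ?_⟩
  intro x y hc h
  have key : ∀ j (hx : col x = j) (hy : col y = j), f j ⟨x, hx⟩ = f j ⟨y, hy⟩ → x = y := by
    intro j hx hy h
    simpa using (f j).injective h
  apply key (col y) hc rfl
  refine Eq.trans ?_ h
  have : ∀ j (hx : col x = j), f j ⟨x, hx⟩ = f (col x) ⟨x, rfl⟩ := by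
    rintro j rfl; rfl
  exact this _ hc

lemma phs_num {ℓ : ℕ} (G : SimpleGraph (Fin ℓ))
    (hdeg : ∀ v : Fin ℓ, (G.neighborSet v).ncard ≤ 3) :
    ∃ n : G.Dart → Fin 3, ∀ d d' : G.Dart, d.fst = d'.fst → n d = n d' → d = d' := by
  classical
  have : ∀ i, Nonempty (G.neighborSet i ↪ Fin 3) := fun i => by
    apply Function.Embedding.nonempty_of_card_le
    rw [← Nat.card_eq_fintype_card, Nat.card_coe_set_eq]
    simpa using hdeg i
  have f := fun i => (this i).some
  refine ⟨fun d => f d.fst ⟨d.snd, d.adj⟩, ?_⟩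
  rintro ⟨⟨i, j⟩, h⟩ ⟨⟨i', j'⟩, h'⟩ hc hn
  dsimp at hc
  subst hc
  have := (f i).injective hn
  have := congrArg Subtype.val this
  dsimp at this
  subst this
  rfl

theorem phs_main {W : Type*} [Fintype W] {ℓ t : ℕ}
    (H : SimpleGraph W) (G : SimpleGraph (Fin ℓ)) (col : W → Fin ℓ)
    (bit : W → Fin t → Bool) (hbit : ∀ x y, col x = col y → bit x = bit y → x = y)
    (S : Finset (W ⊕ H.edgeSet)) (hS : ∀ a, ∃ x ∈ S, phsR H G col bit a x) :
    ℓ + G.edgeSet.ncard ≤ S.card ∧ (S.card ≤ ℓ + G.edgeSet.ncard →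
      ∃ inj : Fin ℓ → W, Function.Injective inj ∧ (∀ i, col (inj i) = i) ∧
          ∀ i j, G.Adj i j → H.Adj (inj i) (inj j)) := by
  classical
  have hX : ∀ i, ∃ x, Sum.inl x ∈ S ∧ col x = i := by
    intro i
    obtain ⟨x | f, hx, hR⟩ := hS (.inl (.inl i))
    · exact ⟨x, hx, hR⟩
    · exact hR.elim
  have hF : ∀ e : G.edgeSet, ∃ f : H.edgeSet, Sum.inr f ∈ S ∧ (f : Sym2 W).map col = e := by
    intro e
    obtain ⟨x | f, hx, hR⟩ := hS (.inl (.inr e))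
    · exact hR.elim
    · exact ⟨f, hx, hR⟩
  choose X hXS hXc using hX
  choose F hFS hFc using hF
  have hXi : Function.Injective X := fun i j h => by rw [← hXc i, ← hXc j, h]
  have hFi : Function.Injective F := fun i j h => by
    apply Subtype.ext; rw [← hFc i, ← hFc j, h]
  let h : Fin ℓ ⊕ G.edgeSet → W ⊕ H.edgeSet := Sum.map X F
  have hi : Function.Injective h := Sum.map_injective.2 ⟨hXi, hFi⟩
  let T := Finset.univ.image h
  have hT : T.card = ℓ + G.edgeSet.ncard := by
    rw [Finset.card_image_of_injective _ hi, Finset.card_univ, Fintype.card_sum, Fintype.card_fin,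
      ← Nat.card_coe_set_eq, Nat.card_eq_fintype_card]
  have hTS : T ⊆ S := by
    intro z hz
    obtain ⟨a | a, -, rfl⟩ := Finset.mem_image.1 hz
    · exact hXS a
    · exact hFS a
  refine ⟨hT ▸ Finset.card_le_card hTS, fun hle => ?_⟩
  have hTe : T = S := Finset.eq_of_subset_of_card_le hTS (by omega)
  have hS1 : ∀ w, Sum.inl w ∈ S → X (col w) = w := by
    intro w hw
    rw [← hTe] at hw
    obtain ⟨a | a, -, ha⟩ := Finset.mem_image.1 hw
    · have : X a = w := by simpa [h] using ha
      rw [← this, hXc]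
    · simp [h] at ha
  have hS2 : ∀ f, Sum.inr f ∈ S → ∀ e : G.edgeSet, (f : Sym2 W).map col = e → f = F e := by
    intro f hf e hfe
    rw [← hTe] at hf
    obtain ⟨a | a, -, ha⟩ := Finset.mem_image.1 hf
    · simp [h] at ha
    · have : F a = f := by simpa [h] using ha
      rw [← this]
      congr 1
      apply Subtype.ext
      rw [← hfe, ← this, hFc]
  have key : ∀ i j (hij : G.Adj i j) x y, (F ⟨s(i, j), hij⟩ : Sym2 W) = s(x, y) →
      col x = i → col y = j → X i = x := by
    intro i j hij x y hf hx hy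
    apply hbit
    · rw [hXc, hx]
    · funext b
      obtain ⟨w | f, hw, hR⟩ := hS (.inr (⟨(i, j), hij⟩, b, bit x b))
      · obtain ⟨h1, h2⟩ := hR
        have := hS1 w hw
        dsimp at h1
        rw [h1] at this
        rw [this, h2]
      · obtain ⟨x', y', h1, h2, h3, h4⟩ := hR
        dsimp at h2 h3
        have := hS2 f hw ⟨s(i, j), hij⟩ (by rw [h1]; simp [h2, h3])
        rw [← this, h1, Sym2.eq_iff] at hf
        rcases hf with ⟨rfl, -⟩ | ⟨rfl, rfl⟩
        · exact absurd rfl h4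
        · exact absurd (h2.symm.trans hy) hij.ne
  refine ⟨X, hXi, hXc, fun i j hij => ?_⟩
  have hm := hFc ⟨s(i, j), hij⟩
  have hmem := (F ⟨s(i, j), hij⟩).2
  obtain ⟨x, y, hxy, hx, hy⟩ : ∃ x y, (F ⟨s(i, j), hij⟩ : Sym2 W) = s(x, y) ∧ col x = i ∧
      col y = j := by
    generalize (F ⟨s(i, j), hij⟩ : Sym2 W) = q at hm
    induction q with | _ x y
    simp only [Sym2.map_mk, Sym2.eq_iff] at hm
    rcases hm with ⟨h1, h2⟩ | ⟨h1, h2⟩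
    · exact ⟨x, y, rfl, h1, h2⟩
    · exact ⟨y, x, Sym2.eq_swap, h2, h1⟩
  rw [hxy] at hmem
  have e1 := key i j hij x y hxy hx hy
  have e2 := key j i hij.symm y x (by
    have : (⟨s(j, i), hij.symm⟩ : G.edgeSet) = ⟨s(i, j), hij⟩ := Subtype.ext Sym2.eq_swap
    rw [this, hxy, Sym2.eq_swap]) hy hx
  rw [e1, e2]
  exact hmem

theorem phs_back {W : Type*} [Fintype W] {ℓ t : ℕ}
    (H : SimpleGraph W) (G : SimpleGraph (Fin ℓ)) (col : W → Fin ℓ)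
    (bit : W → Fin t → Bool) (X : Fin ℓ → W) (hXc : ∀ i, col (X i) = i)
    (hadj : ∀ i j, G.Adj i j → H.Adj (X i) (X j)) :
    ∃ S : Finset (W ⊕ H.edgeSet), S.card ≤ ℓ + G.edgeSet.ncard ∧
      ∀ a, ∃ x ∈ S, phsR H G col bit a x := by
  classical
  have hF : ∀ e : G.edgeSet, (e : Sym2 (Fin ℓ)).map X ∈ H.edgeSet := by
    rintro ⟨e, he⟩
    induction e with | _ x y
    exact hadj _ _ he
  let h : Fin ℓ ⊕ G.edgeSet → W ⊕ H.edgeSet := Sum.map X (fun e => ⟨_, hF e⟩)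
  refine ⟨Finset.univ.image h, ?_, ?_⟩
  · refine Finset.card_image_le.trans ?_
    rw [Finset.card_univ, Fintype.card_sum, Fintype.card_fin,
      ← Nat.card_coe_set_eq, Nat.card_eq_fintype_card]
  · have hm : ∀ a, h a ∈ Finset.univ.image h := fun a => by simp
    rintro ((i | e) | ⟨d, b, v⟩)
    · exact ⟨_, hm (.inl i), hXc i⟩
    · refine ⟨_, hm (.inr e), ?_⟩
      show Sym2.map col (Sym2.map X e) = e
      rw [Sym2.map_map, show col ∘ X = id from funext hXc, Sym2.map_id, id]
    · by_cases hv : bit (X d.fst) b = v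
      · exact ⟨_, hm (.inl d.fst), hXc _, hv⟩
      · exact ⟨_, hm (.inr ⟨s(d.fst, d.snd), d.adj⟩), X d.fst, X d.snd, rfl, hXc _, hXc _, hv⟩

/-- the subfamily key -/
def phsP {ℓ t : ℕ} (G : SimpleGraph (Fin ℓ)) (n : G.Dart → Fin 3) :
    (Fin ℓ ⊕ G.edgeSet) ⊕ (G.Dart × Fin t × Bool) → Option (Fin 3 × Bool × Fin t × Bool)
  | .inl _ => none
  | .inr (d, b, v) => some (n d, decide (d.fst < d.snd), b, v)

lemma phs_disj {W : Type*} {ℓ t : ℕ}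
    (H : SimpleGraph W) (G : SimpleGraph (Fin ℓ)) (col : W → Fin ℓ)
    (bit : W → Fin t → Bool) (n : G.Dart → Fin 3)
    (hn : ∀ d d' : G.Dart, d.fst = d'.fst → n d = n d' → d = d') :
    ∀ a b, a ≠ b → phsP G n a = phsP G n b → ∀ x, phsR H G col bit a x →
      phsR H G col bit b x → False := by
  rintro ((i | e) | ⟨d, b, v⟩) ((i' | e') | ⟨d', b', v'⟩) hne hp (x | f) hR hR' <;>
    simp only [phsR, phsP, reduceCtorEq] at hp hR hR'
  · exact hne (by rw [← hR, ← hR'])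
  · exact hne (by rw [Subtype.ext (hR.symm.trans hR')])
  · simp only [Option.some.injEq, Prod.mk.injEq] at hp
    obtain ⟨h1, h2, rfl, rfl⟩ := hp
    exact hne (by rw [hn d d' (hR.1.symm.trans hR'.1) h1])
  · simp only [Option.some.injEq, Prod.mk.injEq] at hp
    obtain ⟨h1, h2, rfl, rfl⟩ := hp
    obtain ⟨x, y, hf, hx, hy, -⟩ := hR
    obtain ⟨x', y', hf', hx', hy', -⟩ := hR'
    rw [hf, Sym2.eq_iff] at hf'
    rcases hf' with ⟨rfl, rfl⟩ | ⟨rfl, rfl⟩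
    · exact hne (by rw [hn d d' (hx.symm.trans hx') h1])
    · have := d.adj.ne
      rw [← hx, ← hy, ← hx', ← hy', decide_eq_decide] at h2
      rw [← hx, ← hy] at this
      rcases lt_or_gt_of_ne this with h | h
      · exact lt_asymm h (h2.1 h)
      · exact lt_asymm h (h2.2 h)

/-- Combinatorial core of the reduction from Partitioned Subgraph Isomorphism proving
W[1]-hardness of O(log(|U||F|))-Partitioned Hitting Set.  Given graphs `H` (on vertex type
`W` with a coloring `col : W → Fin ℓ`) and `G` (on `Fin ℓ`), with `G` connected of maximum
degree 3, each color class `H_i = col⁻¹ i` an independent set of exactly `2^t` vertices, and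
no `H`-edges between color classes `i, j` unless `(g_i, g_j) ∈ E(G)`, there exist a universe
`U` with `|U| = |V(H)| + |E(H)|` and a family `Fam` of subsets of `U` with
`|Fam| ≤ 4t|E(G)| + |E(G)| + ℓ`, partitioned into `16t + 1` subfamilies of pairwise
disjoint sets, such that (i) `Fam` admits a hitting set of size at most `ℓ + |E(G)|` iff the
PSI instance has a colorful solution, and (ii) `Fam` admits no hitting set of size at most
`ℓ + |E(G)| − 1`. -/
theorem psi_to_partitionedHittingSet {W : Type*} [Fintype W] {ℓ t : ℕ} (ht : 1 ≤ t)
    (H : SimpleGraph W) (G : SimpleGraph (Fin ℓ)) (col : W → Fin ℓ)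
    (hconn : G.Connected)
    (hdeg : ∀ v : Fin ℓ, (G.neighborSet v).ncard ≤ 3)
    (hsize : ∀ i : Fin ℓ, {x : W | col x = i}.ncard = 2 ^ t)
    (hind : ∀ x y : W, col x = col y → ¬ H.Adj x y)
    (hedge : ∀ x y : W, ¬ G.Adj (col x) (col y) → ¬ H.Adj x y) :
    ∃ (U : Type) (_ : Fintype U) (_ : DecidableEq U) (Fam : Finset (Finset U)),
      Fintype.card U = Fintype.card W + H.edgeSet.ncard ∧
      Fam.card ≤ 4 * t * G.edgeSet.ncard + G.edgeSet.ncard + ℓ ∧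
      (∃ part : Finset U → Fin (16 * t + 1),
        ∀ f ∈ Fam, ∀ g ∈ Fam, f ≠ g → part f = part g → Disjoint f g) ∧
      ((∃ S : Finset U, S.card ≤ ℓ + G.edgeSet.ncard ∧
          ∀ f ∈ Fam, (S ∩ f).Nonempty) ↔
        (∃ inj : Fin ℓ → W, Function.Injective inj ∧ (∀ i, col (inj i) = i) ∧
          ∀ i j, G.Adj i j → H.Adj (inj i) (inj j))) ∧
      ¬ (∃ S : Finset U, S.card ≤ ℓ + G.edgeSet.ncard - 1 ∧
          ∀ f ∈ Fam, (S ∩ f).Nonempty) := by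
  classical
  obtain ⟨bit, hbit⟩ := phs_bits col hsize
  obtain ⟨n, hn⟩ := phs_num G hdeg
  have hE : Fintype.card G.edgeSet = G.edgeSet.ncard := by
    rw [← Nat.card_coe_set_eq, Nat.card_eq_fintype_card]
  have hEH : Fintype.card H.edgeSet = H.edgeSet.ncard := by
    rw [← Nat.card_coe_set_eq, Nat.card_eq_fintype_card]
  have hD : Fintype.card G.Dart = 2 * G.edgeSet.ncard := by
    rw [G.dart_card_eq_twice_card_edges, ← hE, SimpleGraph.edgeFinset_card]
  obtain ⟨U, i1, i2, Fam, hU, hFam, hpart, hhit⟩ :=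
    phs_transport (m := 16 * t + 1) 0 (by simp; omega) (phsR H G col bit) (phsP G n)
      (phs_disj H G col bit n hn)
  refine ⟨U, i1, i2, Fam, ?_, ?_, hpart, ?_, ?_⟩
  · rw [hU, Fintype.card_sum, hEH]
  · refine hFam.trans (le_of_eq ?_)
    simp only [Fintype.card_sum, Fintype.card_prod, Fintype.card_fin, Fintype.card_bool, hE, hD]
    ring
  · rw [hhit]
    constructor
    · rintro ⟨S, hS, h⟩
      exact (phs_main H G col bit hbit S h).2 hS
    · rintro ⟨X, -, hXc, hadj⟩
      exact phs_back H G col bit X hXc hadj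
  · rw [hhit]
    rintro ⟨S, hS, h⟩
    have h1 := (phs_main H G col bit hbit S h).1
    obtain ⟨v⟩ := hconn.nonempty
    have := v.pos
    omega
end
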